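/- Let R be a commutative ring and n ≥ 1. (i) For g, g' ∈ GL_n(R((u))) one has g·R[[u]]^n = g'·R[[u]]^n if and only if g^{-1}·g' ∈ GL_n(R[[u]]); in particular the stabilizer of the standard lattice R[[u]]^n under the action of GL_n(R((u))) on lattices is GL_n(R[[u]]). (ii) For every lattice L in R((u))^n there exist f₁,…,f_m ∈ R generating the unit ideal and, for each j, an element g_j ∈ GL_n(R_{f_j}((u))) such that the R_{f_j}[[u]]-submodule of R_{f_j}((u))^n generated by the image of L under the coefficientwise localization map equals g_j·R_{f_j}[[u]]^n. -/

import Mathlib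

noncomputable section
namespace Pap

variable (R : Type*) [CommRing R]

/-- `u^m` as a Laurent series. -/
def U (m : ℤ) : LaurentSeries R := HahnSeries.single m 1

/-- `R[[u]]` as a `R[[u]]`-submodule of `R((u))`. -/
def psRange : Submodule (PowerSeries R) (LaurentSeries R) :=
  LinearMap.range (Algebra.linearMap (PowerSeries R) (LaurentSeries R))

variable (n : ℕ)

/-- `R((u))^n`. -/
abbrev V := Fin n → LaurentSeries R

instance (priority := 10000) : AddCommGroup (V R n) := Pi.addCommGroup
instance (priority := 10000) : Module (PowerSeries R) (V R n) := Pi.module _ _ _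
instance (priority := 10000) : Module (LaurentSeries R) (V R n) := Pi.module _ _ _

/-- Multiplication by a Laurent series, as an `R[[u]]`-linear endomorphism of `R((u))^n`. -/
def smulV (a : LaurentSeries R) : V R n →ₗ[PowerSeries R] V R n where
  toFun x := a • x
  map_add' x y := smul_add a x y
  map_smul' c x := by
    funext i
    exact mul_smul_comm c a (x i)

/-- Image of a submodule under multiplication by a Laurent series. -/
def scaleL (a : LaurentSeries R) (L : Submodule (PowerSeries R) (V R n)) :
    Submodule (PowerSeries R) (V R n) := L.map (smulV R n a)

/-- The standard lattice `R[[u]]^n`. -/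
def stdLat : Submodule (PowerSeries R) (V R n) := Submodule.pi Set.univ fun _ => psRange R

/-- The quotient `B/(A ∩ B)`; for `A ≤ B` this is `B/A`. -/
abbrev subQuot (A B : Submodule (PowerSeries R) (V R n)) :=
  B ⧸ (A.comap B.subtype)

/-- A lattice in `R((u))^n`. -/
def IsLattice (L : Submodule (PowerSeries R) (V R n)) : Prop :=
  ∃ N : ℕ, scaleL R n (U R N) (stdLat R n) ≤ L ∧ L ≤ scaleL R n (U R (-(N : ℤ))) (stdLat R n) ∧
    Module.Finite R (RestrictScalars R (PowerSeries R)
      (subQuot R n L (scaleL R n (U R (-(N : ℤ))) (stdLat R n)))) ∧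
    Module.Projective R (RestrictScalars R (PowerSeries R)
      (subQuot R n L (scaleL R n (U R (-(N : ℤ))) (stdLat R n))))

/-- The action of an invertible matrix over `R((u))` on `R[[u]]`-submodules of `R((u))^n`. -/
def glLat (g : GL (Fin n) (LaurentSeries R)) (L : Submodule (PowerSeries R) (V R n)) :
    Submodule (PowerSeries R) (V R n) :=
  L.map ((Matrix.mulVecLin (g : Matrix (Fin n) (Fin n) (LaurentSeries R))).restrictScalars
    (PowerSeries R))

/-- Coefficientwise map of Laurent series along a ring map. -/
def lsMap {S : Type*} [CommRing S] (f : R →+* S) (x : LaurentSeries R) : LaurentSeries S where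
  coeff g := f (x.coeff g)
  isPWO_support' := x.isPWO_support'.mono (fun g hg => by
    simp only [Function.mem_support] at hg ⊢
    intro h; exact hg (by rw [h, map_zero]))

end Pap
end

namespace PapAux
open Module

lemma split {R X Q : Type*} [CommRing R] [AddCommGroup X] [Module R X] [AddCommGroup Q] [Module R Q]
    [Projective R Q] (f : X →ₗ[R] Q) (hf : Function.Surjective f) :
    Nonempty (X ≃ₗ[R] (LinearMap.ker f) × Q) := by
  obtain ⟨g, hg⟩ := Module.projective_lifting_property f LinearMap.id hf
  exact ⟨((LinearMap.exact_subtype_ker_map f).splitSurjectiveEquiv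
    (Submodule.subtype_injective _) ⟨g, hg⟩).1⟩

lemma gens_of_rank {R P : Type*} [CommRing R] [AddCommGroup P] [Module R P]
    [Module.Finite R P] [Projective R P] (n : ℕ) (p : PrimeSpectrum R)
    (h : rankAtStalk (R := R) P p = n) :
    ∃ (e : Fin n → P) (f : R), f ∉ p.asIdeal ∧ ∀ x, f • x ∈ Submodule.span R (Set.range e) := by
  classical
  let S := p.asIdeal.primeCompl
  let ι := LocalizedModule.mkLinearMap S P
  have hfree : Module.Free (Localization.AtPrime p.asIdeal) (LocalizedModule S P) :=
    free_of_flat_of_isLocalRing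
  let b := Module.finBasisOfFinrankEq (Localization.AtPrime p.asIdeal) (LocalizedModule S P) h
  have h1 : ∀ i, ∃ (s : S) (x : P), s • b i = ι x := by
    intro i
    obtain ⟨⟨x, s⟩, hx⟩ := IsLocalizedModule.surj S ι (b i)
    exact ⟨s, x, hx⟩
  choose s e he using h1
  have h2 : ∀ x : P, ∃ c : S, c • x ∈ Submodule.span R (Set.range e) := by
    intro x
    have hx : ι x ∈ (Submodule.span R (Set.range e)).localized' (Localization.AtPrime p.asIdeal) S ι := by
      rw [Submodule.localized'_span]
      have : (⊤ : Submodule (Localization.AtPrime p.asIdeal) (LocalizedModule S P)) ≤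
          Submodule.span (Localization.AtPrime p.asIdeal) (ι '' Set.range e) := by
        rw [← b.span_eq, Submodule.span_le]
        rintro _ ⟨i, rfl⟩
        have hu := IsLocalization.map_units (Localization.AtPrime p.asIdeal) (s i)
        have : b i = (↑(hu.unit⁻¹) : Localization.AtPrime p.asIdeal) • ι (e i) := by
          rw [← he i, Submonoid.smul_def, ← algebraMap_smul (Localization.AtPrime p.asIdeal) (s i : R) (b i),
            smul_smul, IsUnit.val_inv_mul, one_smul]
        rw [this]
        exact Submodule.smul_mem _ _ (Submodule.subset_span ⟨_, ⟨i, rfl⟩, rfl⟩)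
      exact this trivial
    obtain ⟨m, hm, t, hmt⟩ := hx
    rw [IsLocalizedModule.mk'_eq_iff] at hmt
    have : ι m = ι (t • x) := by rw [hmt, Submonoid.smul_def, Submonoid.smul_def, map_smul]
    obtain ⟨c, hc⟩ := (IsLocalizedModule.eq_iff_exists S ι).1 this
    refine ⟨c * t, ?_⟩
    rw [mul_smul, ← hc]
    exact Submodule.smul_mem _ (c : R) hm
  choose c hc using h2
  obtain ⟨T, hT⟩ := (inferInstance : Module.Finite R P)
  refine ⟨e, ∏ x ∈ T, (c x : R), ?_, ?_⟩
  · have : (∏ x ∈ T, (c x : R)) ∈ S := Submonoid.prod_mem _ fun x _ => (c x).2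
    exact this
  · intro x
    have hx : x ∈ Submodule.span R (T : Set P) := hT ▸ trivial
    induction hx using Submodule.span_induction with
    | mem x h =>
      rw [← Finset.prod_erase_mul _ _ (show x ∈ T from h), mul_smul]
      exact Submodule.smul_mem _ _ (hc x)
    | zero => simp
    | add x y _ _ hx hy => rw [smul_add]; exact add_mem hx hy
    | smul a x _ hx => rw [smul_comm]; exact Submodule.smul_mem _ _ hx

lemma localGens {R M : Type*} [CommRing R] [AddCommGroup M] [Module R M] (n : ℕ)
    (φ : M →ₗ[R] M) (hφ : Function.Injective φ) (L : Submodule R M)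
    (hL : L.map φ ≤ L) (π : M →ₗ[R] (Fin n → R)) (hπ : Function.Surjective π)
    (hker : LinearMap.ker π = LinearMap.range φ) [Module.Finite R (M ⧸ L)]
    [Projective R (M ⧸ L)] (p : PrimeSpectrum R) :
    ∃ (e : Fin n → M) (f : R), (∀ i, e i ∈ L) ∧ f ∉ p.asIdeal ∧
      ∀ x ∈ L, ∃ (a : Fin n → R), ∃ y ∈ L, f • x = ∑ i, a i • e i + φ y := by
  let X := M ⧸ L.map φ
  let f1 : X →ₗ[R] M ⧸ L := Submodule.factor hL
  have hf1 : Function.Surjective f1 := Submodule.factor_surjective hL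
  have hle : L.map φ ≤ LinearMap.ker π := by
    rw [hker]; exact LinearMap.map_le_range
  let f2 : X →ₗ[R] (Fin n → R) := (L.map φ).liftQ π hle
  have hf2 : Function.Surjective f2 := by
    intro y
    obtain ⟨x, rfl⟩ := hπ y
    exact ⟨Submodule.Quotient.mk x, rfl⟩
  let q : M →ₗ[R] X := (L.map φ).mkQ ∘ₗ φ
  have hqk : LinearMap.ker q = L := by
    ext x
    have : x ∈ LinearMap.ker q ↔ φ x ∈ L.map φ := Submodule.Quotient.mk_eq_zero _
    rw [this]
    constructor
    · rintro ⟨y, hy, h⟩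
      rwa [← hφ h]
    · intro h; exact ⟨x, h, rfl⟩
  have hqr : LinearMap.range q = LinearMap.ker f2 := by
    ext x
    obtain ⟨x, rfl⟩ := Submodule.Quotient.mk_surjective _ x
    constructor
    · rintro ⟨y, hy⟩
      rw [← hy]
      have : φ y ∈ LinearMap.ker π := by rw [hker]; exact ⟨y, rfl⟩
      exact this
    · intro h
      have : x ∈ LinearMap.ker π := h
      rw [hker] at this
      obtain ⟨y, rfl⟩ := this
      exact ⟨y, rfl⟩
  let eK : (M ⧸ L) ≃ₗ[R] LinearMap.ker f2 :=
    (Submodule.quotEquivOfEq _ _ hqk.symm).trans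
      (q.quotKerEquivRange.trans (LinearEquiv.ofEq _ _ hqr))
  obtain ⟨e1⟩ := split f1 hf1
  obtain ⟨e2⟩ := split f2 hf2
  let E : (LinearMap.ker f1 × (M ⧸ L)) ≃ₗ[R] (M ⧸ L) × (Fin n → R) :=
    e1.symm.trans (e2.trans (eK.symm.prodCongr (LinearEquiv.refl R _)))
  have : Module.Finite R (LinearMap.ker f1) :=
    Module.Finite.of_surjective (LinearMap.fst R _ _ ∘ₗ E.symm.toLinearMap)
      (fun x => ⟨E (x, 0), by simp⟩)
  have : Projective R (LinearMap.ker f1 × (M ⧸ L)) := Projective.of_equiv E.symm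
  have : Projective R (LinearMap.ker f1) :=
    Projective.of_split (LinearMap.inl R _ (M ⧸ L)) (LinearMap.fst R _ _) (by ext; rfl)
  have hrk : rankAtStalk (R := R) (LinearMap.ker f1) p = n := by
    have := congrFun (rankAtStalk_eq_of_equiv E) p
    rw [rankAtStalk_prod, rankAtStalk_prod] at this
    have hn : Nontrivial R := p.nontrivial
    have h3 : rankAtStalk (R := R) (Fin n → R) p = n := by
      rw [rankAtStalk_eq_finrank_of_free]; simp
    simp only [Pi.add_apply, h3] at this
    omega
  obtain ⟨e, f, hf, h⟩ := gens_of_rank n p hrk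
  have h4 : ∀ i, ∃ x ∈ L, (Submodule.Quotient.mk x : X) = (e i : X) := by
    intro i
    obtain ⟨x, hx⟩ := Submodule.Quotient.mk_surjective _ (e i : X)
    refine ⟨x, ?_, hx⟩
    have := (e i).2
    rw [← hx] at this
    exact (Submodule.Quotient.mk_eq_zero L).1 this
  choose e' he' hee using h4
  refine ⟨e', f, he', hf, fun x hx => ?_⟩
  have hx1 : (Submodule.Quotient.mk x : X) ∈ LinearMap.ker f1 :=
    (Submodule.Quotient.mk_eq_zero L).2 hx
  obtain ⟨a, ha⟩ := (Submodule.mem_span_range_iff_exists_fun R).1 (h ⟨_, hx1⟩)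
  have ha' := congrArg Subtype.val ha
  simp only [Submodule.coe_sum, Submodule.coe_smul, ← hee] at ha'
  have h5 : f • x - ∑ i, a i • e' i ∈ L.map φ := by
    rw [← Submodule.Quotient.mk_eq_zero, Submodule.Quotient.mk_sub, sub_eq_zero]
    rw [Submodule.Quotient.mk_smul, ← ha', ← Submodule.mkQ_apply, map_sum]
    rfl
  obtain ⟨y, hy, h6⟩ := h5
  exact ⟨a, y, hy, by rw [h6]; abel⟩

lemma nak {A M : Type*} [CommRing A] [AddCommGroup M] [Module A M] [Module.Finite A M]
    (u : A) (hu : u ∈ Ideal.jacobson (⊥ : Ideal A)) (L T : Submodule A M) (k : ℕ)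
    (hk : ∀ x : M, u ^ k • x ∈ L)
    (h : ∀ x ∈ L, ∃ t ∈ T, ∃ y ∈ L, x = t + u • y) : L ≤ T := by
  have h1 : ∀ j : ℕ, ∀ x ∈ L, ∃ t ∈ T, ∃ y ∈ L, x = t + u ^ j • y := by
    intro j
    induction j with
    | zero => intro x hx; exact ⟨0, T.zero_mem, x, hx, by simp⟩
    | succ j ih =>
      intro x hx
      obtain ⟨t, ht, y, hy, rfl⟩ := ih x hx
      obtain ⟨t', ht', y', hy', rfl⟩ := h y hy
      refine ⟨t + u ^ j • t', T.add_mem ht (T.smul_mem _ ht'), y', hy', ?_⟩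
      rw [smul_add, smul_smul, pow_succ]; abel
  let N := (⊤ : Submodule A M).map (LinearMap.lsmul A M (u ^ k))
  have hN : N.FG := (Module.Finite.fg_top).map _
  have hNT : N ≤ T := by
    refine Submodule.le_of_le_smul_of_le_jacobson_bot hN
      (I := Ideal.span {u}) ((Ideal.span_singleton_le_iff_mem _).2 hu) ?_
    rintro _ ⟨x, -, rfl⟩
    obtain ⟨t, ht, y, hy, he⟩ := h1 (k + 1) _ (hk x)
    rw [LinearMap.lsmul_apply, he, pow_succ', mul_smul]
    exact Submodule.add_mem_sup ht (Submodule.smul_mem_smul (Ideal.mem_span_singleton_self u)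
      ⟨y, trivial, rfl⟩)
  intro x hx
  obtain ⟨t, ht, y, hy, rfl⟩ := h1 k x hx
  exact T.add_mem ht (hNT ⟨y, trivial, rfl⟩)

lemma X_mem_jac (S : Type*) [CommRing S] :
    (PowerSeries.X : PowerSeries S) ∈ Ideal.jacobson (⊥ : Ideal (PowerSeries S)) := by
  rw [Ideal.mem_jacobson_bot]
  intro y
  rw [PowerSeries.isUnit_iff_constantCoeff]
  simp

end PapAux

namespace PapAux
open Pap

section
variable (R : Type*) [CommRing R] (n : ℕ)

lemma U_mul (a b : ℤ) : U R a * U R b = U R (a + b) := by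
  simp [U]

lemma U_zero : U R 0 = 1 := rfl

lemma U_inv (a : ℤ) : U R a * U R (-a) = 1 := by
  rw [U_mul, add_neg_cancel, U_zero]

lemma isUnit_U (a : ℤ) : IsUnit (U R a) := IsUnit.of_mul_eq_one _ (U_inv R a)

lemma algMap_X_pow (k : ℕ) :
    algebraMap (PowerSeries R) (LaurentSeries R) (PowerSeries.X ^ k) = U R k := by
  rw [LaurentSeries.coe_algebraMap, HahnSeries.ofPowerSeries_X_pow]; rfl

lemma algMap_inj : Function.Injective (algebraMap (PowerSeries R) (LaurentSeries R)) := by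
  rw [LaurentSeries.coe_algebraMap]
  exact HahnSeries.ofPowerSeries_injective

/-- Multiplication by `u^(-N)` from power series vectors. -/
noncomputable def iota (N : ℕ) : (Fin n → PowerSeries R) →ₗ[PowerSeries R] V R n :=
  smulV R n (U R (-(N : ℤ))) ∘ₗ
    (Algebra.linearMap (PowerSeries R) (LaurentSeries R)).compLeft (Fin n)

lemma iota_apply (N : ℕ) (x : Fin n → PowerSeries R) (i : Fin n) :
    iota R n N x i = U R (-(N : ℤ)) * algebraMap (PowerSeries R) (LaurentSeries R) (x i) := rfl

lemma mem_stdLat (x : V R n) : x ∈ stdLat R n ↔ ∀ i, x i ∈ psRange R := by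
  simp [stdLat, Submodule.mem_pi]

lemma range_std : LinearMap.range
    ((Algebra.linearMap (PowerSeries R) (LaurentSeries R)).compLeft (Fin n)) = stdLat R n := by
  ext x
  rw [mem_stdLat]
  constructor
  · rintro ⟨y, rfl⟩ i
    exact ⟨y i, rfl⟩
  · intro h
    choose y hy using h
    exact ⟨y, funext hy⟩

lemma iota_range (N : ℕ) : LinearMap.range (iota R n N) =
    scaleL R n (U R (-(N : ℤ))) (stdLat R n) := by
  rw [iota, LinearMap.range_comp, range_std]; rfl

lemma iota_inj (N : ℕ) : Function.Injective (iota R n N) := by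
  intro x y h
  funext i
  have := congrFun h i
  rw [iota_apply, iota_apply] at this
  exact algMap_inj R ((isUnit_U R _).mul_left_cancel this)

lemma X_smul_iota (N : ℕ) (y : Fin n → PowerSeries R) :
    iota R n N ((PowerSeries.X ^ (2 * N) : PowerSeries R) • y) ∈
      scaleL R n (U R N) (stdLat R n) := by
  refine ⟨fun i => algebraMap _ _ (y i), (mem_stdLat R n _).2 fun i => ⟨y i, rfl⟩, ?_⟩
  funext i
  rw [iota_apply]
  show U R N * _ = _
  rw [Pi.smul_apply, smul_eq_mul, map_mul, algMap_X_pow, ← mul_assoc, U_mul]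
  congr 2
  push_cast; ring

lemma glLat_le_iff (g g' : GL (Fin n) (LaurentSeries R)) :
    glLat R n g (stdLat R n) ≤ glLat R n g' (stdLat R n) ↔
      ∀ i j, ((g'⁻¹ * g : GL (Fin n) (LaurentSeries R)) :
            Matrix (Fin n) (Fin n) (LaurentSeries R)) i j ∈ psRange R := by
  classical
  constructor
  · intro h i j
    have hj : (Pi.single j 1 : V R n) ∈ stdLat R n := by
      rw [mem_stdLat]
      intro k
      by_cases hk : k = j
      · subst hk; rw [Pi.single_eq_same]; exact ⟨1, map_one (algebraMap (PowerSeries R) (LaurentSeries R))⟩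
      · rw [Pi.single_eq_of_ne hk]; exact zero_mem _
    obtain ⟨v, hv, hv'⟩ := h ⟨_, hj, rfl⟩
    have h1 : (g' : Matrix (Fin n) (Fin n) (LaurentSeries R)).mulVec v =
      (g : Matrix (Fin n) (Fin n) (LaurentSeries R)).mulVec (Pi.single j 1) := hv'
    have h2 : v = ((g'⁻¹ * g : GL (Fin n) (LaurentSeries R)) :
            Matrix (Fin n) (Fin n) (LaurentSeries R)).mulVec (Pi.single j 1) := by
      rw [Units.val_mul, ← Matrix.mulVec_mulVec, ← h1, Matrix.mulVec_mulVec, ← Units.val_mul]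
      simp
    have h3 := congrFun h2 i
    rw [Matrix.mulVec_single_one] at h3
    have h4 := (mem_stdLat R n v).1 hv i
    rw [h3] at h4
    exact h4
  · rintro h _ ⟨x, hx, rfl⟩
    refine ⟨((g'⁻¹ * g : GL (Fin n) (LaurentSeries R)) :
            Matrix (Fin n) (Fin n) (LaurentSeries R)).mulVec x, ?_, ?_⟩
    · refine (mem_stdLat R n _).2 fun i => ?_
      rw [Matrix.mulVec_eq_sum, Finset.sum_apply]
      refine Submodule.sum_mem _ fun j _ => ?_
      show ((g'⁻¹ * g : GL (Fin n) (LaurentSeries R)) :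
            Matrix (Fin n) (Fin n) (LaurentSeries R)) i j * x j ∈ psRange R
      obtain ⟨a, ha⟩ := h i j
      obtain ⟨b, hb⟩ := (mem_stdLat R n x).1 hx j
      rw [← ha, ← hb]
      exact ⟨a * b, map_mul (algebraMap (PowerSeries R) (LaurentSeries R)) a b⟩
    · show Matrix.mulVec (g' : Matrix (Fin n) (Fin n) (LaurentSeries R)) (Matrix.mulVec _ x) =
        Matrix.mulVec (g : Matrix (Fin n) (Fin n) (LaurentSeries R)) x
      rw [Matrix.mulVec_mulVec, ← Units.val_mul]
      simp

lemma glLat_span (g : GL (Fin n) (LaurentSeries R)) (v : Fin n → V R n)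
    (hg : ∀ i j, (g : Matrix (Fin n) (Fin n) (LaurentSeries R)) i j = v j i) :
    glLat R n g (stdLat R n) = Submodule.span (PowerSeries R) (Set.range v) := by
  ext x
  rw [Submodule.mem_span_range_iff_exists_fun]
  have key : ∀ c : Fin n → PowerSeries R,
      (g : Matrix (Fin n) (Fin n) (LaurentSeries R)).mulVec
        (fun i => algebraMap (PowerSeries R) (LaurentSeries R) (c i)) = ∑ i, c i • v i := by
    intro c
    funext i
    rw [Matrix.mulVec_eq_sum, Finset.sum_apply, Finset.sum_apply]
    refine Finset.sum_congr rfl fun j _ => ?_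
    show (g : Matrix (Fin n) (Fin n) (LaurentSeries R)) i j * algebraMap _ _ (c j) = c j • v j i
    rw [Algebra.smul_def, ← hg, mul_comm]
  constructor
  · rintro ⟨y, hy, rfl⟩
    have := (mem_stdLat R n y).1 hy
    choose c hc using this
    refine ⟨c, ?_⟩
    rw [← key]
    have : y = fun i => algebraMap (PowerSeries R) (LaurentSeries R) (c i) :=
      (funext hc).symm
    rw [this]; rfl
  · rintro ⟨c, rfl⟩
    exact ⟨_, (mem_stdLat R n _).2 fun i => ⟨c i, rfl⟩, key c⟩

/-- Quotient comparison. -/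
lemma quot_equiv (N : ℕ) (L : Submodule (PowerSeries R) (V R n)) :
    Nonempty (RestrictScalars R (PowerSeries R)
      (subQuot R n L (scaleL R n (U R (-(N : ℤ))) (stdLat R n))) ≃ₗ[R]
      ((Fin n → PowerSeries R) ⧸ (L.comap (iota R n N)).restrictScalars R)) := by
  let B := scaleL R n (U R (-(N : ℤ))) (stdLat R n)
  let e0 : (Fin n → PowerSeries R) ≃ₗ[PowerSeries R] B :=
    (LinearEquiv.ofInjective _ (iota_inj R n N)).trans (LinearEquiv.ofEq _ _ (iota_range R n N))
  let e1 : ((Fin n → PowerSeries R) ⧸ (L.comap (iota R n N))) ≃ₗ[PowerSeries R]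
      subQuot R n L B := Submodule.Quotient.equiv _ _ e0 (by
        ext x
        constructor
        · rintro ⟨y, hy, rfl⟩; exact hy
        · intro hx
          refine ⟨e0.symm x, ?_, e0.apply_symm_apply x⟩
          have h : e0 (e0.symm x) ∈ L.comap B.subtype := by
            rw [e0.apply_symm_apply]; exact hx
          exact h)
  let e2 : ((Fin n → PowerSeries R) ⧸ (L.comap (iota R n N))) ≃ₗ[R]
      RestrictScalars R (PowerSeries R) (subQuot R n L B) :=
    { toFun := fun x => (RestrictScalars.addEquiv R (PowerSeries R) _).symm (e1 x)
      invFun := fun x => e1.symm (RestrictScalars.addEquiv R (PowerSeries R) _ x)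
      left_inv := fun x => by simp
      right_inv := fun x => by simp
      map_add' := fun x y => by simp
      map_smul' := fun r x => by
        rw [← algebraMap_smul (PowerSeries R) r x, map_smul]
        rfl }
  exact ⟨e2.symm.trans (Submodule.Quotient.restrictScalarsEquiv R _).symm⟩

variable {R}
variable {S : Type*} [CommRing S] (h : R →+* S)

lemma lsMap_iota (N : ℕ) (x : Fin n → PowerSeries R) (i : Fin n) :
    lsMap R h (iota R n N x i) = iota S n N (fun j => PowerSeries.map h (x j)) i := by
  ext d
  rw [iota_apply, iota_apply]
  show h (HahnSeries.coeff _ d) = _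
  have e : d = (d + N) + (-(N : ℤ)) := by ring
  rw [e, U, U, HahnSeries.coeff_single_mul_add, HahnSeries.coeff_single_mul_add, one_mul, one_mul,
    LaurentSeries.coe_algebraMap, LaurentSeries.coe_algebraMap]
  rw [PowerSeries.coeff_coe, PowerSeries.coeff_coe]
  split_ifs <;> simp

end
end PapAux

namespace PapAux
open Pap

lemma chart {R : Type*} [CommRing R] (n : ℕ) {S : Type*} [CommRing S] (h : R →+* S) (f : R)
    (hf : IsUnit (h f)) (N : ℕ) (L : Submodule (PowerSeries R) (V R n))
    (hLr : L ≤ LinearMap.range (iota R n N))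
    (hX : ∀ y, iota R n N ((PowerSeries.X ^ (2 * N) : PowerSeries R) • y) ∈ L)
    (e : Fin n → Fin n → PowerSeries R) (he : ∀ i, iota R n N (e i) ∈ L)
    (hgen : ∀ x, iota R n N x ∈ L → ∃ (a : Fin n → R) (y : Fin n → PowerSeries R),
      iota R n N y ∈ L ∧ f • x = ∑ i, a i • e i + (PowerSeries.X : PowerSeries R) • y) :
    ∃ g : GL (Fin n) (LaurentSeries S),
        Submodule.span (PowerSeries S)
          ((fun x : V R n => fun i => lsMap R h (x i)) '' (L : Set (V R n)))
          = glLat S n g (stdLat S n) := by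
  classical
  let m : (Fin n → PowerSeries R) →+ (Fin n → PowerSeries S) :=
    { toFun := fun x j => PowerSeries.map h (x j)
      map_zero' := by funext j; simp
      map_add' := fun x y => by funext j; simp }
  have m_apply : ∀ x j, m x j = PowerSeries.map h (x j) := fun _ _ => rfl
  have m_smul : ∀ (a : PowerSeries R) x, m (a • x) = PowerSeries.map h a • m x := by
    intro a x; funext j; simp [m_apply]
  have m_smul' : ∀ (a : R) x, m (a • x) = (PowerSeries.C (h a) : PowerSeries S) • m x := by
    intro a x; funext j; simp [m_apply, PowerSeries.smul_eq_C_mul]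
  let L0 : Set (Fin n → PowerSeries R) := {x | iota R n N x ∈ L}
  let L' : Submodule (PowerSeries S) (Fin n → PowerSeries S) :=
    Submodule.span (PowerSeries S) (m '' L0)
  let T : Submodule (PowerSeries S) (Fin n → PowerSeries S) :=
    Submodule.span (PowerSeries S) (Set.range fun i => m (e i))
  have hXL : ∀ y, (PowerSeries.X ^ (2 * N) : PowerSeries S) • y ∈ L' := by
    intro y
    have hy : y = ∑ i, y i • m (Pi.single i 1) := by
      funext j
      simp [Finset.sum_apply, m_apply, Pi.single_apply, apply_ite (PowerSeries.map h)]
    rw [hy, Finset.smul_sum]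
    refine Submodule.sum_mem _ fun i _ => ?_
    rw [smul_comm]
    refine Submodule.smul_mem _ _ ?_
    refine Submodule.subset_span ⟨(PowerSeries.X ^ (2 * N) : PowerSeries R) • Pi.single i 1,
      hX _, ?_⟩
    rw [m_smul]; simp
  have hTL : T ≤ L' := by
    refine Submodule.span_le.2 ?_
    rintro _ ⟨i, rfl⟩
    exact Submodule.subset_span ⟨e i, he i, rfl⟩
  have hstep : ∀ x ∈ L', ∃ t ∈ T, ∃ y ∈ L', x = t + (PowerSeries.X : PowerSeries S) • y := by
    intro x hx
    induction hx using Submodule.span_induction with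
    | mem x hx =>
      obtain ⟨x, hx, rfl⟩ := hx
      obtain ⟨a, y, hy, hxy⟩ := hgen x hx
      have h1 := congrArg m hxy
      rw [m_smul', map_add, map_sum, m_smul, PowerSeries.map_X] at h1
      let c : PowerSeries S := PowerSeries.C (↑(hf.unit⁻¹) : S)
      have hc : c * PowerSeries.C (h f) = 1 := by
        rw [← map_mul, IsUnit.val_inv_mul, map_one]
      refine ⟨c • ∑ i, m (a i • e i), T.smul_mem _ (Submodule.sum_mem _ fun i _ => ?_),
        c • m y, L'.smul_mem _ (Submodule.subset_span ⟨y, hy, rfl⟩), ?_⟩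
      · rw [m_smul']
        exact T.smul_mem _ (Submodule.subset_span ⟨i, rfl⟩)
      · rw [smul_comm _ c, ← smul_add, ← h1, smul_smul, hc, one_smul]
    | zero => exact ⟨0, T.zero_mem, 0, L'.zero_mem, by simp⟩
    | add x y _ _ hx hy =>
      obtain ⟨t, ht, z, hz, rfl⟩ := hx
      obtain ⟨t', ht', z', hz', rfl⟩ := hy
      exact ⟨t + t', T.add_mem ht ht', z + z', L'.add_mem hz hz', by rw [smul_add]; abel⟩
    | smul a x _ hx =>
      obtain ⟨t, ht, z, hz, rfl⟩ := hx
      exact ⟨a • t, T.smul_mem _ ht, a • z, L'.smul_mem _ hz, by rw [smul_add, smul_comm a]⟩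
  have hLT : L' = T := le_antisymm (nak _ (X_mem_jac S) L' T (2 * N) hXL hstep) hTL
  -- the matrix
  let E : Matrix (Fin n) (Fin n) (PowerSeries S) := Matrix.of fun i j => m (e j) i
  have hA : ∀ j, ∃ c : Fin n → PowerSeries S, ∑ i, c i • m (e i) =
      (PowerSeries.X ^ (2 * N) : PowerSeries S) • (Pi.single j 1 : Fin n → PowerSeries S) := by
    intro j
    have := hXL (Pi.single j 1)
    rw [hLT] at this
    exact (Submodule.mem_span_range_iff_exists_fun _).1 this
  choose A hA using hA
  have hEA : E * (Matrix.of fun i j => A j i) =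
      (PowerSeries.X ^ (2 * N) : PowerSeries S) • (1 : Matrix (Fin n) (Fin n) (PowerSeries S)) := by
    ext1 i j
    have := congrFun (hA j) i
    rw [Finset.sum_apply] at this
    rw [Matrix.mul_apply, Matrix.smul_apply, Matrix.one_apply]
    rw [Pi.smul_apply, Pi.single_apply] at this
    rw [← this]
    refine Finset.sum_congr rfl fun k _ => ?_
    simp [E, mul_comm]
  let α := algebraMap (PowerSeries S) (LaurentSeries S)
  have hdet : IsUnit (α E.det) := by
    have h1 := congrArg (fun M => α (Matrix.det M)) hEA
    simp only [Matrix.det_mul, map_mul, Matrix.det_smul, Matrix.det_one, mul_one] at h1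
    refine isUnit_of_mul_isUnit_left (y := α (Matrix.det (Matrix.of fun i j => A j i))) ?_
    rw [h1, map_pow, algMap_X_pow]
    exact (isUnit_U S _).pow _
  let G : Matrix (Fin n) (Fin n) (LaurentSeries S) := U S (-(N : ℤ)) • E.map α
  have hG : IsUnit G.det := by
    rw [Matrix.det_smul]
    refine ((isUnit_U S _).pow _).mul ?_
    have : (E.map α).det = α E.det := (RingHom.map_det α E).symm
    rw [this]; exact hdet
  refine ⟨Matrix.GeneralLinearGroup.mk'' G hG, ?_⟩
  rw [glLat_span S n _ (fun i => iota S n N (m (e i)))]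
  · have h1 : Set.range (fun i => iota S n N (m (e i))) =
        iota S n N '' Set.range (fun i => m (e i)) := by
      rw [← Set.range_comp]; rfl
    have h2 : (fun x : V R n => fun i => lsMap R h (x i)) '' (L : Set (V R n)) =
        iota S n N '' (m '' L0) := by
      ext x
      constructor
      · rintro ⟨y, hy, rfl⟩
        obtain ⟨z, rfl⟩ := hLr hy
        exact ⟨m z, ⟨z, hy, rfl⟩, funext fun i => (lsMap_iota n h N z i).symm⟩
      · rintro ⟨_, ⟨z, hz, rfl⟩, rfl⟩
        exact ⟨_, hz, funext fun i => lsMap_iota n h N z i⟩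
    rw [h1, h2, Submodule.span_image, Submodule.span_image]
    exact congrArg _ hLT
  · intro i j
    rfl

end PapAux

open Pap in
/-- (i) Two elements of `GL_n(R((u)))` give the same translate of the standard lattice iff they
differ by an element of `GL_n(R[[u]])`; (ii) Zariski-locally on `R`, every lattice is a
`GL_n`-translate of the standard lattice. -/
theorem stmt5 (R : Type*) [CommRing R] (n : ℕ) (hn : 1 ≤ n)
    (L : Submodule (PowerSeries R) (V R n)) (hL : IsLattice R n L) :
    (∀ g g' : GL (Fin n) (LaurentSeries R),
      glLat R n g (stdLat R n) = glLat R n g' (stdLat R n) ↔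
        ((∀ i j, ((g⁻¹ * g' : GL (Fin n) (LaurentSeries R)) :
            Matrix (Fin n) (Fin n) (LaurentSeries R)) i j ∈ psRange R) ∧
         (∀ i j, ((g'⁻¹ * g : GL (Fin n) (LaurentSeries R)) :
            Matrix (Fin n) (Fin n) (LaurentSeries R)) i j ∈ psRange R))) ∧
    ∃ (m : ℕ) (fs : Fin m → R), Ideal.span (Set.range fs) = ⊤ ∧
      ∀ j : Fin m, ∃ g : GL (Fin n) (LaurentSeries (Localization.Away (fs j))),
        Submodule.span (PowerSeries (Localization.Away (fs j)))
          ((fun x : V R n => fun i =>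
              lsMap R (algebraMap R (Localization.Away (fs j))) (x i)) ''
            (L : Set (V R n)))
          = glLat (Localization.Away (fs j)) n g (stdLat (Localization.Away (fs j)) n) := by
  refine ⟨fun g g' => ?_, ?_⟩
  · rw [le_antisymm_iff, PapAux.glLat_le_iff, PapAux.glLat_le_iff, and_comm]
  obtain ⟨N, h1, h2, h3, h4⟩ := hL
  obtain ⟨q⟩ := PapAux.quot_equiv R n N L
  have := Module.Finite.equiv q
  have := Module.Projective.of_equiv q
  have hp : ∀ p : PrimeSpectrum R, ∃ f : R, f ∉ p.asIdeal ∧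
      ∃ (e : Fin n → Fin n → PowerSeries R), (∀ i, PapAux.iota R n N (e i) ∈ L) ∧
      (∀ x, PapAux.iota R n N x ∈ L → ∃ (a : Fin n → R) (y : Fin n → PowerSeries R),
      PapAux.iota R n N y ∈ L ∧ f • x = ∑ i, a i • e i + (PowerSeries.X : PowerSeries R) • y) := by
    intro p
    let φ : (Fin n → PowerSeries R) →ₗ[R] (Fin n → PowerSeries R) :=
      (LinearMap.lsmul (PowerSeries R) (Fin n → PowerSeries R) PowerSeries.X).restrictScalars R
    have hφ : ∀ x i, φ x i = PowerSeries.X * x i := fun _ _ => rfl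
    let π : (Fin n → PowerSeries R) →ₗ[R] (Fin n → R) :=
      (PowerSeries.coeff (R := R) 0).compLeft (Fin n)
    have hπ : ∀ x i, π x i = PowerSeries.coeff 0 (x i) := fun _ _ => rfl
    obtain ⟨e, f, he, hf, h⟩ := PapAux.localGens n φ (fun x y hxy => by
        funext i
        exact PowerSeries.X_mul_cancel (congrFun hxy i))
      ((L.comap (PapAux.iota R n N)).restrictScalars R)
      (by
        rintro _ ⟨x, hx, rfl⟩
        exact (L.comap (PapAux.iota R n N)).smul_mem _ hx)
      π (fun y => ⟨fun i => PowerSeries.C (y i), by funext i; simp [hπ]⟩)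
      (by
        ext x
        constructor
        · intro hx
          have : ∀ i, PowerSeries.X ∣ x i := by
            intro i
            rw [PowerSeries.X_dvd_iff, ← PowerSeries.coeff_zero_eq_constantCoeff_apply]
            exact congrFun hx i
          choose y hy using this
          exact ⟨y, funext fun i => (hy i).symm⟩
        · rintro ⟨y, rfl⟩
          rw [LinearMap.mem_ker]
          funext i
          simp [hπ, hφ]) p
    exact ⟨f, hf, e, he, fun x hx => by
      obtain ⟨a, y, hy, hxy⟩ := h x hx
      exact ⟨a, y, hy, hxy⟩⟩
  choose F hF e he hgen using hp
  have htop : Ideal.span (Set.range F) = ⊤ := by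
    by_contra hne
    obtain ⟨M, hM, hle⟩ := Ideal.exists_le_maximal _ hne
    exact hF ⟨M, hM.isPrime⟩ (hle (Ideal.subset_span ⟨_, rfl⟩))
  obtain ⟨T, hT, hT1⟩ := Submodule.mem_span_finite_of_mem_span
    ((Ideal.eq_top_iff_one _).1 htop)
  let eq := T.equivFin
  refine ⟨T.card, fun j => (eq.symm j : R), ?_, ?_⟩
  · rw [Ideal.eq_top_iff_one]
    have : Set.range (fun j => (eq.symm j : R)) = (T : Set R) := by
      ext x
      constructor
      · rintro ⟨j, rfl⟩; exact (eq.symm j).2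
      · intro hx; exact ⟨eq ⟨x, hx⟩, by simp⟩
    rw [this]; exact hT1
  · intro j
    obtain ⟨p, hp⟩ := hT (eq.symm j).2
    refine PapAux.chart n _ (eq.symm j : R) (IsLocalization.Away.algebraMap_isUnit _) N L
      (by rw [PapAux.iota_range]; exact h2) (fun y => h1 (PapAux.X_smul_iota R n N y))
      (e p) (he p) ?_
    rw [← hp]
    exact hgen p
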